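/- arXiv:1008.4548 — 5 statements merged into one kernel-verified Lean document; each statement's English description precedes it below -/
import Mathlib

section
/- Every infinite traceable graph containing no chordless 4-path contains a subgraph isomorphic to the complete countable bipartite graph K_{ω,ω}. -/
/-- `G` contains a chordless path on `n` vertices: `n` distinct vertices
`v 0, …, v (n-1)` where `v i` and `v j` are adjacent iff `|i - j| = 1`. -/
def HasChordlessPath {V : Type*} (G : SimpleGraph V) (n : ℕ) : Prop :=
  ∃ v : Fin n → V, Function.Injective v ∧
    ∀ i j : Fin n, G.Adj (v i) (v j) ↔ ((i : ℕ) + 1 = (j : ℕ) ∨ (j : ℕ) + 1 = (i : ℕ))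

/-- `G` contains a subgraph isomorphic to `H`. -/
def ContainsCopy {V W : Type*} (G : SimpleGraph V) (H : SimpleGraph W) : Prop :=
  ∃ g : W → V, Function.Injective g ∧ ∀ x y : W, H.Adj x y → G.Adj (g x) (g y)

/-!
Along the ray fix a non-principal ultrafilter, and call a vertex large if it is adjacent to almost
every vertex. If infinitely many vertices are large, then any finitely many of them have a common
neighbour among almost all vertices, and one builds a half graph. Otherwise some tail of the ray has
no large vertex. Without chordless 4-paths every vertex of the tail is within distance two of its
first vertex `r`, so almost every vertex `w` of the tail is a non-neighbour of `r` joined to it by a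
midpoint `m w`; since `m w` is not large, almost every later `w'` misses it, and excluding chordless
4-paths then forces `w` to be adjacent to `m w'`. This again is a half graph. Finally, by Ramsey's
theorem, a half graph has a side containing an infinite clique, or a half subgraph with both sides
independent; the latter is complete bipartite, again because chordless 4-paths are excluded.
-/

open Filter Function Set

section Ramsey

lemma exists_seq_of_eventually_eventually {α : Type*} {l : Filter α} [NeBot l]
    {R : α → α → Prop} (h : ∀ᶠ a in l, ∀ᶠ b in l, R a b) :
    ∃ f : ℕ → α, ∀ i j, i < j → R (f i) (f j) := by
  obtain ⟨f, -, hf⟩ := exists_seq_of_forall_finset_exists (fun a ↦ ∀ᶠ b in l, R a b) R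
    fun s hs ↦ (h.and ((eventually_all_finset s).2 hs)).exists
  exact ⟨f, hf⟩

lemma exists_strictMono_of_eventually_eventually {l : Filter ℕ} [NeBot l] (hl : l ≤ atTop)
    {R : ℕ → ℕ → Prop} (h : ∀ᶠ i in l, ∀ᶠ j in l, R i j) :
    ∃ φ : ℕ → ℕ, StrictMono φ ∧ ∀ i j, i < j → R (φ i) (φ j) := by
  have h_lt : ∀ᶠ i in l, ∀ᶠ j in l, i < j ∧ R i j :=
    h.mono fun i hi ↦ ((eventually_gt_atTop i).filter_mono hl).and hi
  obtain ⟨φ, hφ⟩ := exists_seq_of_eventually_eventually h_lt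
  exact ⟨φ, fun i j hij ↦ (hφ i j hij).1, fun i j hij ↦ (hφ i j hij).2⟩

lemma exists_strictMono_forall_lt_or_forall_lt_not (R : ℕ → ℕ → Prop) :
    ∃ φ : ℕ → ℕ, StrictMono φ ∧
      ((∀ i j, i < j → R (φ i) (φ j)) ∨ ∀ i j, i < j → ¬ R (φ i) (φ j)) := by
  by_cases h : ∀ᶠ i in hyperfilter ℕ, ∀ᶠ j in hyperfilter ℕ, R i j
  · obtain ⟨φ, hφ, hR⟩ := exists_strictMono_of_eventually_eventually Nat.hyperfilter_le_atTop h
    exact ⟨φ, hφ, .inl hR⟩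
  · simp only [← Ultrafilter.eventually_not] at h
    obtain ⟨φ, hφ, hR⟩ := exists_strictMono_of_eventually_eventually Nat.hyperfilter_le_atTop h
    exact ⟨φ, hφ, .inr hR⟩

end Ramsey

section FourPathFree

variable {V : Type*} {G : SimpleGraph V}

lemma containsCopy_of_forall_lt_adj {W : Type*} [Countable W] (H : SimpleGraph W) {p : ℕ → V}
    (hp : ∀ i j, i < j → G.Adj (p i) (p j)) : ContainsCopy G H := by
  obtain ⟨e, he⟩ := exists_injective_nat W
  have hp_inj : Injective p := Injective.of_lt_imp_ne fun i j hij ↦ (hp i j hij).ne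
  refine ⟨p ∘ e, hp_inj.comp he, fun x y hxy ↦ ?_⟩
  rcases (he.ne hxy.ne).lt_or_gt with hlt | hgt
  · exact hp _ _ hlt
  · exact (hp _ _ hgt).symm

lemma containsCopy_completeBipartiteGraph {α β : Type*} {p : α → V} {q : β → V}
    (hp : Injective p) (hq : Injective q) (hpq : ∀ a b, G.Adj (p a) (q b)) :
    ContainsCopy G (completeBipartiteGraph α β) := by
  refine ⟨Sum.elim p q, hp.sumElim hq fun a b ↦ (hpq a b).ne, ?_⟩
  rintro (a | b) (a' | b') h
  · simp at h
  · exact hpq a b'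
  · exact (hpq a' b).symm
  · simp at h

lemma adj_or_adj_or_adj_of_not_hasChordlessPath_four (hG : ¬ HasChordlessPath G 4) {a b c d : V}
    (hab : G.Adj a b) (hbc : G.Adj b c) (hcd : G.Adj c d) :
    G.Adj a c ∨ G.Adj a d ∨ G.Adj b d := by
  by_contra! ⟨hac, had, hbd⟩
  have hac_ne : a ≠ c := by rintro rfl; exact had hcd
  have had_ne : a ≠ d := by rintro rfl; exact hac hcd.symm
  have hbd_ne : b ≠ d := by rintro rfl; exact had hab
  refine hG ⟨![a, b, c, d], fun i j hij ↦ ?_, fun i j ↦ ?_⟩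
  · fin_cases i <;> fin_cases j <;>
      simp_all [hab.ne, hbc.ne, hcd.ne, hab.ne', hbc.ne', hcd.ne', hac_ne.symm, had_ne.symm,
        hbd_ne.symm]
  · fin_cases i <;> fin_cases j <;>
      simp [hab, hbc, hcd, hac, had, hbd, G.adj_comm b a, G.adj_comm c a, G.adj_comm d a,
        G.adj_comm c b, G.adj_comm d b, G.adj_comm d c]

lemma eq_or_adj_or_exists_adj_adj_of_not_hasChordlessPath_four (hG : ¬ HasChordlessPath G 4)
    {T : ℕ → V} (hT : ∀ i, G.Adj (T i) (T (i + 1))) (n : ℕ) :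
    T n = T 0 ∨ G.Adj (T 0) (T n) ∨ ∃ m, G.Adj (T 0) (T m) ∧ G.Adj (T m) (T n) := by
  induction n with
  | zero => exact .inl rfl
  | succ n ih =>
    rcases ih with h_eq | h_adj | ⟨m, h0m, hmn⟩
    · exact .inr (.inl (h_eq ▸ hT n))
    · exact .inr (.inr ⟨n, h_adj, hT n⟩)
    · rcases adj_or_adj_or_adj_of_not_hasChordlessPath_four hG h0m hmn (hT n)
        with h0n | h0n' | hmn'
      · exact .inr (.inr ⟨n, h0n, hT n⟩)
      · exact .inr (.inl h0n')
      · exact .inr (.inr ⟨m, h0m, hmn'⟩)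

lemma adj_of_not_hasChordlessPath_four_of_adj_adj (hG : ¬ HasChordlessPath G 4)
    {r m m' w w' : V} (hrm : G.Adj r m) (hmw : G.Adj m w) (hrm' : G.Adj r m')
    (hmw' : G.Adj m' w') (hrw : ¬ G.Adj r w) (hrw' : ¬ G.Adj r w') (h_miss : ¬ G.Adj m w') :
    G.Adj w m' := by
  by_contra hwm'
  have hmm' : G.Adj m m' := by
    simpa [G.adj_comm w r, hrw, hwm'] using
      adj_or_adj_or_adj_of_not_hasChordlessPath_four hG hmw.symm hrm.symm hrm'
  have hww' : G.Adj w w' := by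
    simpa [hwm', h_miss] using
      adj_or_adj_or_adj_of_not_hasChordlessPath_four hG hmw.symm hmm' hmw'
  simpa [hrw, hrw', h_miss] using
    adj_or_adj_or_adj_of_not_hasChordlessPath_four hG hrm hmw hww'

/-- The sequences `p` and `q` are the two sides of an infinite half graph in `G`: `p i` is adjacent
to `q j` whenever `i ≤ j`. Nothing is required of the other pairs, so this is a copy of the half
graph as a subgraph, not necessarily as an induced one. -/
structure IsHalfGraph (G : SimpleGraph V) (p q : ℕ → V) : Prop where
  injective_left : Injective p
  injective_right : Injective q
  adj : ∀ ⦃i j⦄, i ≤ j → G.Adj (p i) (q j)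

namespace IsHalfGraph

variable {p q : ℕ → V}

lemma comp_strictMono (h : IsHalfGraph G p q) {φ : ℕ → ℕ} (hφ : StrictMono φ) :
    IsHalfGraph G (p ∘ φ) (q ∘ φ) where
  injective_left := h.injective_left.comp hφ.injective
  injective_right := h.injective_right.comp hφ.injective
  adj _ _ hij := h.adj (hφ.monotone hij)

lemma adj_of_forall_lt_not_adj (h : IsHalfGraph G p q) (hG : ¬ HasChordlessPath G 4)
    (hp : ∀ i j, i < j → ¬ G.Adj (p i) (p j)) (hq : ∀ i j, i < j → ¬ G.Adj (q i) (q j))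
    (i j : ℕ) : G.Adj (p i) (q j) := by
  rcases le_or_gt i j with hij | hji
  · exact h.adj hij
  · simpa [G.adj_comm (p i) (p j), G.adj_comm (q i) (q j), hp j i hji, hq j i hji] using
      adj_or_adj_or_adj_of_not_hasChordlessPath_four hG
        (h.adj le_rfl) (h.adj hji.le).symm (h.adj le_rfl)

theorem containsCopy_completeBipartiteGraph (h : IsHalfGraph G p q)
    (hG : ¬ HasChordlessPath G 4) : ContainsCopy G (completeBipartiteGraph ℕ ℕ) := by
  obtain ⟨φ, hφ, hp | hp⟩ :=
    exists_strictMono_forall_lt_or_forall_lt_not fun i j ↦ G.Adj (p i) (p j)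
  · exact containsCopy_of_forall_lt_adj _ hp
  obtain ⟨ψ, hψ, hq | hq⟩ :=
    exists_strictMono_forall_lt_or_forall_lt_not fun i j ↦ G.Adj (q (φ i)) (q (φ j))
  · exact containsCopy_of_forall_lt_adj _ hq
  have h_sub : IsHalfGraph G (p ∘ φ ∘ ψ) (q ∘ φ ∘ ψ) := h.comp_strictMono (hφ.comp hψ)
  exact _root_.containsCopy_completeBipartiteGraph h_sub.injective_left h_sub.injective_right
    (h_sub.adj_of_forall_lt_not_adj hG (fun i j hij ↦ hp _ _ (hψ hij)) hq)

end IsHalfGraph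

lemma exists_isHalfGraph_of_eventually_eventually {α : Type*} {l : Filter α} [NeBot l]
    {p q : α → V}
    (h : ∀ᶠ a in l, ∀ᶠ b in l, p a ≠ p b ∧ q a ≠ q b ∧ G.Adj (p a) (q b)) :
    ∃ p' q' : ℕ → V, IsHalfGraph G p' q' := by
  obtain ⟨f, hf⟩ := exists_seq_of_eventually_eventually h
  have hq_inj : Injective fun i ↦ q (f i) :=
    Injective.of_lt_imp_ne fun i j hij ↦ (hf i j hij).2.1
  -- `p (f i)` and `q (f i)` need not be adjacent, hence the shift on the right side.
  exact ⟨fun i ↦ p (f i), fun i ↦ q (f (i + 1)),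
    { injective_left := Injective.of_lt_imp_ne fun i j hij ↦ (hf i j hij).1
      injective_right := hq_inj.comp (add_left_injective 1)
      adj := fun i j hij ↦ (hf i (j + 1) (Nat.lt_succ_of_le hij)).2.2 }⟩

lemma exists_isHalfGraph_of_infinite_setOf_eventually_adj {l : Filter V} [NeBot l]
    (hl : l ≤ cofinite) (h : {v | ∀ᶠ w in l, G.Adj v w}.Infinite) :
    ∃ p q : ℕ → V, IsHalfGraph G p q := by
  set A : Set V := {v | ∀ᶠ w in l, G.Adj v w}
  have := h.cofinite_inf_principal_neBot
  refine exists_isHalfGraph_of_eventually_eventually (l := (cofinite ⊓ 𝓟 A) ×ˢ l)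
    (p := Prod.fst) (q := Prod.snd) ?_
  have h_mem : ∀ᶠ z in (cofinite ⊓ 𝓟 A) ×ˢ l, z.1 ∈ A :=
    tendsto_fst.eventually (mem_inf_of_right (mem_principal_self A))
  filter_upwards [h_mem] with z hz
  have h_fst : ∀ᶠ a in cofinite ⊓ 𝓟 A, a ≠ z.1 := mem_inf_of_left (eventually_cofinite_ne z.1)
  have h_snd : ∀ᶠ w in l, w ≠ z.2 ∧ G.Adj z.1 w :=
    ((eventually_cofinite_ne z.2).filter_mono hl).and hz
  filter_upwards [h_fst.prod_mk h_snd] with y hy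
  exact ⟨hy.1.symm, hy.2.1.symm, hy.2.2⟩

lemma exists_isHalfGraph_of_eventually_exists_adj_adj (hG : ¬ HasChordlessPath G 4)
    {l : Filter V} [NeBot l] {r : V} {S : Set V} (hr : ∀ᶠ w in l, ¬ G.Adj r w)
    (hS : ∀ m ∈ S, ∀ᶠ w in l, ¬ G.Adj m w)
    (h : ∀ᶠ w in l, ∃ m ∈ S, G.Adj r m ∧ G.Adj m w) :
    ∃ p q : ℕ → V, IsHalfGraph G p q := by
  obtain ⟨mid, h_mid⟩ := h.choice
  refine exists_isHalfGraph_of_eventually_eventually (l := l) (p := id) (q := mid) ?_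
  filter_upwards [hr, h_mid] with w hrw ⟨h_mem, hrm, hmw⟩
  filter_upwards [hr, h_mid, hS _ h_mem] with w' hrw' ⟨_, hrm', hmw'⟩ h_miss
  refine ⟨?_, ?_, adj_of_not_hasChordlessPath_four_of_adj_adj hG hrm hmw hrm' hmw' hrw hrw' h_miss⟩
  · rintro rfl
    exact h_miss hmw
  · intro h_eq
    exact h_miss (h_eq ▸ hmw')

lemma exists_isHalfGraph_of_eventually_mem_range (hG : ¬ HasChordlessPath G 4) {l : Filter V}
    [NeBot l] (hl : l ≤ cofinite) {T : ℕ → V} (hT : ∀ i, G.Adj (T i) (T (i + 1)))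
    (h_range : ∀ᶠ w in l, w ∈ range T) (h_not_adj : ∀ i, ∀ᶠ w in l, ¬ G.Adj (T i) w) :
    ∃ p q : ℕ → V, IsHalfGraph G p q := by
  refine exists_isHalfGraph_of_eventually_exists_adj_adj hG (S := range T) (h_not_adj 0)
    (forall_mem_range.2 h_not_adj) ?_
  filter_upwards [h_range, h_not_adj 0, (eventually_cofinite_ne (T 0)).filter_mono hl]
  rintro _ ⟨n, rfl⟩ h_not_adj_zero h_ne
  simpa [h_ne, h_not_adj_zero] using
    eq_or_adj_or_exists_adj_adj_of_not_hasChordlessPath_four hG hT n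

theorem exists_isHalfGraph_of_ray (hG : ¬ HasChordlessPath G 4) {T : ℕ → V}
    (hT_inj : Injective T) (hT : ∀ i, G.Adj (T i) (T (i + 1))) :
    ∃ p q : ℕ → V, IsHalfGraph G p q := by
  set U : Ultrafilter V := (hyperfilter ℕ).map T
  have hU : (U : Filter V) ≤ cofinite :=
    hT_inj.tendsto_cofinite.mono_left hyperfilter_le_cofinite
  by_cases h_large : {v | ∀ᶠ w in U, G.Adj v w}.Infinite
  · exact exists_isHalfGraph_of_infinite_setOf_eventually_adj hU h_large
  obtain ⟨N, hN⟩ : ∃ N, ∀ n ≥ N, ¬ ∀ᶠ w in U, G.Adj (T n) w := by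
    have h_notMem := hT_inj.tendsto_cofinite.eventually
      (not_infinite.1 h_large).eventually_cofinite_notMem
    rwa [Nat.cofinite_eq_atTop, eventually_atTop] at h_notMem
  have h_tail : ∀ᶠ w in U, w ∈ range fun k ↦ T (N + k) := by
    refine Nat.hyperfilter_le_atTop ((eventually_ge_atTop N).mono fun n hn ↦ ?_)
    exact ⟨n - N, congrArg T (Nat.add_sub_cancel' hn)⟩
  exact exists_isHalfGraph_of_eventually_mem_range hG hU (fun k ↦ hT (N + k)) h_tail
    fun k ↦ Ultrafilter.eventually_not.2 (hN _ (Nat.le_add_right N k))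

end FourPathFree

theorem traceable_no_chordless_four_path_copy_of_Komegaomega_general {V : Type*}
    (G : SimpleGraph V) (T : ℕ → V) (hT_inj : Injective T)
    (hT : ∀ i : ℕ, G.Adj (T i) (T (i + 1))) (hG : ¬ HasChordlessPath G 4) :
    ContainsCopy G (completeBipartiteGraph ℕ ℕ) := by
  obtain ⟨_, _, h⟩ := exists_isHalfGraph_of_ray hG hT_inj hT
  exact h.containsCopy_completeBipartiteGraph hG

/-- Every infinite traceable graph containing no chordless 4-path contains a
subgraph isomorphic to the complete countable bipartite graph `K_{ω,ω}`. -/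
theorem traceable_no_chordless_four_path_copy_of_Komegaomega {V : Type*} (G : SimpleGraph V)
    (T : ℕ ≃ V) (hT : ∀ i : ℕ, G.Adj (T i) (T (i + 1)))
    (hG : ¬ HasChordlessPath G 4) :
    ContainsCopy G (completeBipartiteGraph ℕ ℕ) :=
  traceable_no_chordless_four_path_copy_of_Komegaomega_general G T T.injective hT hG
end

section
/- For every n ∈ ℕ there is an m ∈ ℕ such that every finite traceable graph G with at least m vertices either contains a subgraph isomorphic to K_{2,2} or contains a chordless n-path. -/
/-- A finite graph on vertex type `V` is traceable: there is a bijection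
`T : Fin (card V) ≃ V` with consecutive vertices adjacent. -/
def FinTraceable {V : Type*} [Fintype V] (G : SimpleGraph V) : Prop :=
  ∃ T : Fin (Fintype.card V) ≃ V, ∀ (i : ℕ) (h : i + 1 < Fintype.card V),
    G.Adj (T ⟨i, Nat.lt_of_succ_lt h⟩) (T ⟨i + 1, h⟩)

/-! Suppose that `G` has no chordless `n`-path and let `φ 0, φ 1, …` be a long path in `G`. A
geodesic of an induced subgraph is chordless in `G`, so any `φ i` and `φ j` lie in a connected
subset `B i j` of `φ '' [i, j]` with at most `n` vertices. Enumerate each `B i j`, colour the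
quadruples `i < j < k < l` by the pattern of edges between `B i j` and `B k l`, and apply Ramsey's
theorem. If the common pattern on a homogeneous set `t₀ < t₁ < ⋯` contained an edge, then
`B t₀ t₁` and `B t₂ t₃` on one side and `B t₄ t₅` and `B t₆ t₇` on the other would give a copy of
`K_{2,2}`. Hence the sets `B tᵢ tᵢ₊₁` form a chain in which only neighbouring sets meet or are
joined by an edge. A shortest path in their union from the first set to the last one is long, as it
advances by at most one set per step, and it is chordless. -/

open Finset SimpleGraph

universe u v

section Ramsey

/-- The Erdős–Rado arrow `N → (k)ʳ`: for every colouring of the `r`-subsets of a set with at least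
`N` elements, there are a colour `c` and a set of at least `k c` elements all of whose `r`-subsets
have colour `c`. Colourings are defined on all finite sets; only their values on `r`-subsets
matter. -/
def RamseyArrow {κ : Type v} (N r : ℕ) (k : κ → ℕ) : Prop :=
  ∀ ⦃α : Type u⦄ (S : Finset α) (f : Finset α → κ), N ≤ #S →
    ∃ c, ∃ T ⊆ S, k c ≤ #T ∧ ∀ R ⊆ T, #R = r → f R = c

variable {κ : Type v} {r : ℕ} {k : κ → ℕ}

lemma RamseyArrow.zero [Fintype κ] (k : κ → ℕ) : RamseyArrow.{u} (∑ c, k c) 0 k := by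
  intro α S f hS
  refine ⟨f ∅, S, Subset.rfl, ?_, fun R _ hR ↦ by rw [card_eq_zero.mp hR]⟩
  exact (single_le_sum_of_canonicallyOrdered (mem_univ _)).trans hS

lemma RamseyArrow.succ_of_eq_zero {c : κ} (hc : k c = 0) : RamseyArrow.{u} 0 (r + 1) k := by
  intro α S f _
  refine ⟨c, ∅, empty_subset S, by simp [hc], fun R hR hcard ↦ ?_⟩
  simp [subset_empty.mp hR] at hcard

lemma RamseyArrow.succ [DecidableEq κ] {M : ℕ} {N : κ → ℕ} (hM : RamseyArrow.{u} M r N)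
    (hN : ∀ c, RamseyArrow.{u} (N c) (r + 1) (Function.update k c (k c - 1))) :
    RamseyArrow.{u} (M + 1) (r + 1) k := by
  classical
  intro α S f hS
  obtain ⟨a, ha⟩ : S.Nonempty := card_pos.mp (by lia)
  obtain ⟨c, S', hS', hcard, hlink⟩ :=
    hM (S.erase a) (fun R ↦ f (insert a R)) (by rw [card_erase_of_mem ha]; lia)
  obtain ⟨d, T, hT, hTcard, hmono⟩ := hN c S' f hcard
  have hTS : T ⊆ S.erase a := hT.trans hS'
  rcases ne_or_eq d c with hdc | rfl
  · refine ⟨d, T, hTS.trans (erase_subset a S), ?_, hmono⟩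
    rwa [Function.update_of_ne hdc] at hTcard
  have haT : a ∉ T := fun h ↦ notMem_erase a S (hTS h)
  refine ⟨d, insert a T, insert_subset ha (hTS.trans (erase_subset a S)), ?_, fun R hR hRcard ↦ ?_⟩
  · rw [Function.update_self] at hTcard
    rw [card_insert_of_notMem haT]
    lia
  by_cases haR : a ∈ R
  · rw [← insert_erase haR]
    refine hlink _ ((subset_insert_iff.mp hR).trans hT) ?_
    rw [card_erase_of_mem haR, hRcard, Nat.add_sub_cancel]
  · exact hmono R ((subset_insert_iff_of_notMem haR).mp hR) hRcard

theorem exists_ramseyArrow [Finite κ] (r : ℕ) (k : κ → ℕ) : ∃ N, RamseyArrow.{u} N r k := by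
  classical
  have := Fintype.ofFinite κ
  induction r generalizing k with
  | zero => exact ⟨_, .zero k⟩
  | succ r ihr =>
    induction k using WellFoundedLT.induction with
    | ind k ihk =>
      by_cases hk : ∃ c, k c = 0
      · obtain ⟨c, hc⟩ := hk
        exact ⟨0, .succ_of_eq_zero hc⟩
      push Not at hk
      have hlt (c : κ) : Function.update k c (k c - 1) < k :=
        update_lt_self_iff.mpr (Nat.sub_one_lt (hk c))
      choose N hN using fun c ↦ ihk _ (hlt c)
      obtain ⟨M, hM⟩ := ihr N
      exact ⟨M + 1, hM.succ hN⟩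

theorem exists_ramsey_orderEmbedding (κ : Type v) [Finite κ] [Nonempty κ] (r k : ℕ) :
    ∃ N, ∀ f : (Fin r ↪o Fin N) → κ,
      ∃ (t : Fin k ↪o Fin N) (c : κ), ∀ u : Fin r ↪o Fin k, f (u.trans t) = c := by
  classical
  obtain ⟨N, hN⟩ := exists_ramseyArrow.{0} r (fun _ : κ ↦ k)
  refine ⟨N, fun f ↦ ?_⟩
  obtain ⟨c, T, -, hTcard, hT⟩ := hN univ
    (fun R ↦ if h : #R = r then f (R.orderEmbOfFin h) else Classical.arbitrary κ) (by simp)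
  let t := T.orderEmbOfCardLe hTcard
  refine ⟨t, c, fun u ↦ ?_⟩
  let R := univ.map (u.trans t).toEmbedding
  have hR : #R = r := by simp [R]
  have hRT : R ⊆ T := by
    intro x hx
    obtain ⟨i, -, rfl⟩ := mem_map.mp hx
    exact T.orderEmbOfCardLe_mem hTcard (u i)
  have hsort : u.trans t = R.orderEmbOfFin hR := orderEmbOfFin_unique' hR (by simp [R])
  rw [hsort, ← hT R hRT hR, dif_pos hR]

end Ramsey

section InducedPath

variable {V : Type u} {G : SimpleGraph V} {n : ℕ}

lemma dist_getVert_of_length_eq_dist {a b : V} {w : G.Walk a b} (hw : w.length = G.dist a b)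
    {i : ℕ} (hi : i ≤ w.length) : G.dist a (w.getVert i) = i := by
  rw [← length_eq_dist_of_subwalk hw (w.isSubwalk_take i), Walk.take_length, min_eq_left hi]

theorem pathGraph_isIndContained_of_le_dist {a b : V} (hab : G.Reachable a b)
    (hn : n ≤ G.dist a b + 1) : pathGraph n ⊴ G := by
  obtain ⟨w, hw⟩ := hab.exists_walk_length_eq_dist
  have hdist (i : Fin n) : G.dist a (w.getVert i) = i :=
    dist_getVert_of_length_eq_dist hw (by lia)
  have hadj {i j : Fin n} (hij : (i : ℕ) + 1 = j) : G.Adj (w.getVert i) (w.getVert j) :=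
    hij ▸ w.adj_getVert_succ (by lia)
  have hinj : Function.Injective fun i : Fin n ↦ w.getVert i := fun i j hij ↦
    Fin.ext (by rw [← hdist i, ← hdist j]; exact congrArg _ hij)
  refine ⟨⟨_, hinj⟩, fun {i j} ↦ ?_⟩
  rw [pathGraph_adj]
  refine ⟨fun h ↦ ?_, fun h ↦ h.elim hadj fun hji ↦ (hadj hji).symm⟩
  have hne : (i : ℕ) ≠ j := fun hij ↦ h.ne (congrArg w.getVert hij)
  have hdiff := Adj.diff_dist_adj (u := a) h
  simp only [Function.Embedding.coeFn_mk, hdist] at hdiff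
  lia

theorem exists_connected_range_of_reachable_induce (hG : ¬ pathGraph n ⊴ G) {S : Set V} {a b : S}
    (hab : (G.induce S).Reachable a b) :
    ∃ s : Fin n → V, Set.range s ⊆ S ∧ ↑a ∈ Set.range s ∧ ↑b ∈ Set.range s ∧
      (G.induce (Set.range s)).Connected := by
  obtain ⟨w, hw⟩ := hab.exists_walk_length_eq_dist
  have hlt : w.length < n := by
    by_contra! hle
    exact hG <| (pathGraph_isIndContained_of_le_dist hab (by lia)).trans
      (Embedding.induce S).isIndContained
  let p : G.Walk a b := w.map (Embedding.induce S).toHom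
  have hp : p.length = w.length := w.length_map _
  let s (i : Fin n) : V := p.getVert i
  have hrange : Set.range s = {x | x ∈ p.support} := by
    ext x
    refine ⟨fun ⟨i, hi⟩ ↦ hi ▸ p.getVert_mem_support i, fun hx ↦ ?_⟩
    obtain ⟨i, hi, hle⟩ := Walk.mem_support_iff_exists_getVert.mp hx
    exact ⟨⟨i, by lia⟩, hi⟩
  have hsupport : {x | x ∈ p.support} ⊆ S := by
    intro x hx
    obtain ⟨y, -, rfl⟩ := List.mem_map.mp (w.support_map _ ▸ hx : x ∈ w.support.map _)
    exact y.2
  refine ⟨s, ?_⟩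
  rw [hrange]
  exact ⟨hsupport, p.start_mem_support, p.end_mem_support, p.connected_induce_support⟩

end InducedPath

section Chain

variable {V : Type u} {G : SimpleGraph V} {n : ℕ} {A : Fin (n + 1) → Set V}

lemma induce_iUnion_connected_of_chain (hconn : ∀ i, (G.induce (A i)).Connected)
    (hmeet : ∀ i : Fin n, (A i.castSucc ∩ A i.succ).Nonempty) :
    (G.induce (⋃ i, A i)).Connected := by
  have hsub (i) : A i ⊆ ⋃ i, A i := Set.subset_iUnion A i
  have hreach (i) (x y : A i) : (G.induce (⋃ i, A i)).Reachable ⟨x, hsub i x.2⟩ ⟨y, hsub i y.2⟩ :=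
    ((hconn i).preconnected x y).map (G.induceHomOfLE (hsub i)).toHom
  obtain ⟨a⟩ := (hconn 0).nonempty
  have hfrom (i) : ∀ x : A i,
      (G.induce (⋃ i, A i)).Reachable ⟨a, hsub 0 a.2⟩ ⟨x, hsub i x.2⟩ := by
    induction i using Fin.induction with
    | zero => exact hreach 0 a
    | succ i ih =>
      obtain ⟨y, hy, hy'⟩ := hmeet i
      exact fun x ↦ (ih ⟨y, hy⟩).trans (hreach i.succ ⟨y, hy'⟩ x)
  refine connected_iff_exists_forall_reachable _ |>.mpr ⟨⟨a, hsub 0 a.2⟩, fun ⟨x, hx⟩ ↦ ?_⟩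
  obtain ⟨i, hi⟩ := Set.mem_iUnion.mp hx
  exact hfrom i ⟨x, hi⟩

lemma index_le_add_length_of_chain
    (hfar : ∀ i j : Fin (n + 1), (i : ℕ) + 1 < j → ∀ x ∈ A i, ∀ y ∈ A j, x ≠ y ∧ ¬ G.Adj x y)
    {x y : ↑(⋃ i, A i)} (w : (G.induce (⋃ i, A i)).Walk x y) {i j : Fin (n + 1)}
    (hx : ↑x ∈ A i) (hy : ↑y ∈ A j) : (j : ℕ) ≤ i + w.length + 1 := by
  induction w generalizing i with
  | nil =>
    by_contra! hlt
    exact (hfar i j hlt _ hx _ hy).1 rfl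
  | @cons x z y hxz w ih =>
    obtain ⟨l, hl⟩ := Set.mem_iUnion.mp z.2
    have hle : (l : ℕ) ≤ i + 1 := by
      by_contra! hlt
      exact (hfar i l hlt _ hx _ hl).2 hxz
    have := ih hl hy
    rw [Walk.length_cons]
    lia

theorem pathGraph_isIndContained_of_chain (hconn : ∀ i, (G.induce (A i)).Connected)
    (hmeet : ∀ i : Fin n, (A i.castSucc ∩ A i.succ).Nonempty)
    (hfar : ∀ i j : Fin (n + 1), (i : ℕ) + 1 < j → ∀ x ∈ A i, ∀ y ∈ A j, x ≠ y ∧ ¬ G.Adj x y) :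
    pathGraph n ⊴ G := by
  obtain ⟨a, ha⟩ := (hconn 0).nonempty
  obtain ⟨b, hb⟩ := (hconn (Fin.last n)).nonempty
  have hab : (G.induce (⋃ i, A i)).Reachable
      ⟨a, Set.mem_iUnion_of_mem _ ha⟩ ⟨b, Set.mem_iUnion_of_mem _ hb⟩ :=
    (induce_iUnion_connected_of_chain hconn hmeet).preconnected _ _
  obtain ⟨w, hw⟩ := hab.exists_walk_length_eq_dist
  have hlen := index_le_add_length_of_chain hfar w ha hb
  rw [hw, Fin.val_last, Fin.val_zero, zero_add] at hlen
  exact (pathGraph_isIndContained_of_le_dist hab hlen).trans (Embedding.induce _).isIndContained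

end Chain

section Blocks

lemma hasse_induce_preconnected_of_ordConnected {α : Type u} [LinearOrder α] [SuccOrder α]
    [IsSuccArchimedean α] (S : Set α) [S.OrdConnected] : ((hasse α).induce S).Preconnected := by
  have hcov (x y : S) : (x : α) ⋖ y ↔ x ⋖ y :=
    Set.OrdConnected.apply_covBy_apply_iff (OrderEmbedding.subtype (· ∈ S))
      (Subtype.range_coe ▸ ‹S.OrdConnected›)
  have heq : (hasse α).induce S = hasse S := by
    ext x y
    simp [hcov]
  exact heq ▸ hasse_preconnected_of_succ S

variable {V : Type u} {G : SimpleGraph V} {n : ℕ}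

lemma exists_connected_range_subset_image_uIcc (hG : ¬ pathGraph n ⊴ G) {N : ℕ}
    (φ : Copy (pathGraph N) G) (i j : Fin N) :
    ∃ s : Fin n → V, Set.range s ⊆ φ '' Set.uIcc i j ∧ φ i ∈ Set.range s ∧ φ j ∈ Set.range s ∧
      (G.induce (Set.range s)).Connected :=
  have hpath : ((pathGraph N).induce (Set.uIcc i j)).Preconnected :=
    hasse_induce_preconnected_of_ordConnected (Set.uIcc i j)
  exists_connected_range_of_reachable_induce hG <|
    (hpath ⟨i, Set.left_mem_uIcc⟩ ⟨j, Set.right_mem_uIcc⟩).map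
      (induceHom φ.toHom (Set.mapsTo_image φ _))

lemma completeBipartiteGraph_two_two_isContained {a a' b b' : V} (haa' : a ≠ a') (hbb' : b ≠ b')
    (hab : G.Adj a b) (hab' : G.Adj a b') (ha'b : G.Adj a' b) (ha'b' : G.Adj a' b') :
    completeBipartiteGraph (Fin 2) (Fin 2) ⊑ G := by
  classical
  refine completeBipartiteGraph_isContained_iff.mpr ⟨{a, a'}, {b, b'}, ?_, ?_, ?_⟩
  · simp [card_pair haa']
  · simp [card_pair hbb']
  · simp [IsCompleteBetween, hab, hab', ha'b, ha'b']

theorem exists_orderEmbedding_blocks_not_adj (ι : Type v) [Finite ι] (k : ℕ) :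
    ∃ N, ∀ {V : Type u} {G : SimpleGraph V} (s : Fin N → Fin N → ι → V),
      (completeBipartiteGraph (Fin 2) (Fin 2)).Free G →
      (∀ i j l m, i < j → j < l → l < m → ∀ p q, s i j p ≠ s l m q) →
      ∃ t : Fin k ↪o Fin N, ∀ i j l m, i < j → j < l → l < m →
        ∀ p q, ¬ G.Adj (s (t i) (t j) p) (s (t l) (t m) q) := by
  obtain ⟨N, hN⟩ := exists_ramsey_orderEmbedding (Set (ι × ι)) 4 (k + 8)
  refine ⟨N, fun {V G} s hfree hdisj ↦ ?_⟩
  obtain ⟨t, c, ht⟩ := hN fun u ↦ {x | G.Adj (s (u 0) (u 1) x.1) (s (u 2) (u 3) x.2)}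
  have hpattern {i j l m} (hij : i < j) (hjl : j < l) (hlm : l < m) (p q : ι) :
      G.Adj (s (t i) (t j) p) (s (t l) (t m) q) ↔ (p, q) ∈ c := by
    rw [← ht (OrderEmbedding.ofStrictMono ![i, j, l, m] (by simp [hij, hjl, hlm]))]
    rfl
  have hempty (p q : ι) : (p, q) ∉ c := by
    intro hpq
    let e : Fin 8 ↪o Fin (k + 8) := Fin.natAddOrderEmb k
    have he {i j : Fin 8} (hij : i < j) : e i < e j := e.lt_iff_lt.mpr hij
    have hdisj' {i j l m : Fin 8} (hij : i < j) (hjl : j < l) (hlm : l < m) (p : ι) :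
        s (t (e i)) (t (e j)) p ≠ s (t (e l)) (t (e m)) p :=
      hdisj _ _ _ _ (by simpa) (by simpa) (by simpa) p p
    have hadj {i j l m : Fin 8} (hij : i < j) (hjl : j < l) (hlm : l < m) :
        G.Adj (s (t (e i)) (t (e j)) p) (s (t (e l)) (t (e m)) q) :=
      (hpattern (he hij) (he hjl) (he hlm) p q).mpr hpq
    exact hfree <| completeBipartiteGraph_two_two_isContained
      (hdisj' (i := 0) (j := 1) (l := 2) (m := 3) (by decide) (by decide) (by decide) p)
      (hdisj' (i := 4) (j := 5) (l := 6) (m := 7) (by decide) (by decide) (by decide) q)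
      (hadj (by decide) (by decide) (by decide)) (hadj (by decide) (by decide) (by decide))
      (hadj (by decide) (by decide) (by decide)) (hadj (by decide) (by decide) (by decide))
  refine ⟨(Fin.castAddOrderEmb 8).trans t, fun i j l m hij hjl hlm p q h ↦ ?_⟩
  exact hempty p q ((hpattern (by simpa) (by simpa) (by simpa) p q).mp h)

end Blocks

theorem finite_traceable_K22_or_chordless_general (n : ℕ) :
    ∃ N : ℕ, ∀ {V : Type u} {G : SimpleGraph V}, pathGraph N ⊑ G →
      completeBipartiteGraph (Fin 2) (Fin 2) ⊑ G ∨ pathGraph n ⊴ G := by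
  obtain ⟨N, hN⟩ := exists_orderEmbedding_blocks_not_adj.{u} (Fin n) (n + 2)
  refine ⟨N, fun {V G} ⟨φ⟩ ↦ or_iff_not_imp_left.mpr fun hfree ↦ by_contra fun hG ↦ hG ?_⟩
  choose s hsub hleft hright hconn using exists_connected_range_subset_image_uIcc hG φ
  have hdisj (i j l m) (hij : i < j) (hjl : j < l) (hlm : l < m) (p q) : s i j p ≠ s l m q := by
    intro heq
    obtain ⟨x, hx, hxp⟩ := hsub i j ⟨p, rfl⟩
    obtain ⟨y, hy, hyq⟩ := hsub l m ⟨q, rfl⟩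
    obtain rfl : x = y := φ.injective (hxp.trans (heq.trans hyq.symm))
    rw [Set.uIcc_of_lt hij] at hx
    rw [Set.uIcc_of_lt hlm] at hy
    exact absurd (hx.2.trans_lt hjl) hy.1.not_gt
  obtain ⟨t, ht⟩ := hN s hfree hdisj
  refine pathGraph_isIndContained_of_chain
    (A := fun i : Fin (n + 1) ↦ Set.range (s (t i.castSucc) (t i.succ)))
    (fun i ↦ hconn _ _) (fun i ↦ ⟨φ (t i.succ.castSucc), ?_, hleft _ _⟩) ?_
  · rw [← Fin.succ_castSucc]
    exact hright _ _
  · rintro i j hij _ ⟨p, rfl⟩ _ ⟨q, rfl⟩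
    have hi : i.castSucc < i.succ := Fin.castSucc_lt_succ
    have hj : j.castSucc < j.succ := Fin.castSucc_lt_succ
    have hij' : i.succ < j.castSucc := hij
    exact ⟨hdisj _ _ _ _ (by simp) (by simpa) (by simp) p q, ht _ _ _ _ hi hij' hj p q⟩

lemma containsCopy_iff_isContained {V : Type u} {W : Type v} {G : SimpleGraph V}
    {H : SimpleGraph W} : ContainsCopy G H ↔ H ⊑ G :=
  ⟨fun ⟨g, hinj, hadj⟩ ↦ ⟨⟨g, hadj _ _⟩, hinj⟩,
    fun ⟨f⟩ ↦ ⟨f, f.injective, fun _ _ h ↦ f.toHom.map_adj h⟩⟩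

lemma hasChordlessPath_iff_pathGraph_isIndContained {V : Type u} {G : SimpleGraph V} {n : ℕ} :
    HasChordlessPath G n ↔ pathGraph n ⊴ G :=
  ⟨fun ⟨v, hinj, hadj⟩ ↦ ⟨⟨v, hinj⟩, (hadj _ _).trans pathGraph_adj.symm⟩,
    fun ⟨f⟩ ↦ ⟨f, f.injective, fun _ _ ↦ f.map_adj_iff.trans pathGraph_adj⟩⟩

lemma FinTraceable.pathGraph_isContained {V : Type u} [Fintype V] {G : SimpleGraph V}
    (hG : FinTraceable G) {m : ℕ} (hm : m ≤ Fintype.card V) : pathGraph m ⊑ G := by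
  obtain ⟨T, hT⟩ := hG
  have hadj {x y : Fin m} (hxy : (x : ℕ) + 1 = y) :
      G.Adj (T (x.castLE hm)) (T (y.castLE hm)) := by
    have hy : y.castLE hm = ⟨x + 1, by lia⟩ := Fin.ext hxy.symm
    exact hy ▸ hT x _
  refine ⟨⟨fun x ↦ T (x.castLE hm), fun {x y} hxy ↦ ?_⟩,
    T.injective.comp (Fin.castLE_injective hm)⟩
  exact (pathGraph_adj.mp hxy).elim hadj fun hyx ↦ (hadj hyx).symm

/-- For every `n` there is an `m` such that every finite traceable graph with at
least `m` vertices contains a copy of `K_{2,2}` or a chordless `n`-path. -/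
theorem finite_traceable_K22_or_chordless (n : ℕ) :
    ∃ m : ℕ, ∀ (V : Type) [Fintype V] (G : SimpleGraph V),
      m ≤ Fintype.card V → FinTraceable G →
      ContainsCopy G (completeBipartiteGraph (Fin 2) (Fin 2)) ∨ HasChordlessPath G n := by
  obtain ⟨m, hm⟩ := finite_traceable_K22_or_chordless_general n
  exact ⟨m, fun V _ G hcard hG ↦ (hm (hG.pathGraph_isContained hcard)).imp
    containsCopy_iff_isContained.mpr hasChordlessPath_iff_pathGraph_isIndContained.mpr⟩
end

section
/- Let G be a graph whose vertex set is {0, 1, …, N−1} with i adjacent to i+1 for every i < N−1, let n ≥ 2, and suppose G contains no chordless n-path. Then for all vertices x < y there exist vertices x = a₀ < a₁ < ⋯ < a_k = y with 1 ≤ k ≤ n−2 such that a₀, a₁, …, a_k is a chordless path in G (i.e., a_i and a_j are adjacent if and only if |i − j| = 1). -/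
/-!
Among the walks from `x` to `y` whose steps are edges going up in the order, take a shortest one.
Such walks exist because covering pairs are edges. An edge between two non-consecutive vertices of
the walk would again go up, hence shorten it; so the walk is chordless. If it had `n` or more
vertices, its first `n` vertices would form a chordless `n`-path.
-/

open Relation
open scoped SetRel

section ShortestSeries

variable {α : Type*} {r : SetRel α α}

/-- A relation series of minimal length among those with the same endpoints, the analogue of a
geodesic for a relation. -/
def IsShortest (p : RelSeries r) : Prop :=
  ∀ q : RelSeries r, q.head = p.head → q.last = p.last → p.length ≤ q.length

theorem exists_relSeries_of_reflTransGen {x y : α} (h : ReflTransGen (· ~[r] ·) x y) :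
    ∃ p : RelSeries r, p.head = x ∧ p.last = y := by
  induction h with
  | refl => exact ⟨.singleton r x, rfl, rfl⟩
  | tail _ hbc ih =>
    obtain ⟨p, hhead, rfl⟩ := ih
    exact ⟨p.snoc _ hbc, by rw [p.head_snoc, hhead], p.last_snoc _ hbc⟩

theorem exists_isShortest_of_reflTransGen {x y : α} (h : ReflTransGen (· ~[r] ·) x y) :
    ∃ p : RelSeries r, IsShortest p ∧ p.head = x ∧ p.last = y := by
  let joining : Set (RelSeries r) := {p | p.head = x ∧ p.last = y}
  have hjoining : joining.Nonempty := exists_relSeries_of_reflTransGen h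
  obtain ⟨p, ⟨rfl, rfl⟩, hmin⟩ := exists_minimalFor_of_wellFoundedLT _ RelSeries.length hjoining
  refine ⟨p, fun q hhead hlast ↦ ?_, rfl, rfl⟩
  exact (le_total _ _).elim id (hmin ⟨hhead, hlast⟩)

theorem IsShortest.le_succ_of_rel {p : RelSeries r} (hp : IsShortest p)
    {i j : Fin (p.length + 1)} (hij : p i ~[r] p j) : (j : ℕ) ≤ i + 1 := by
  let shortcut : RelSeries r :=
    (p.take i).append (p.drop j) (by rwa [RelSeries.last_take, RelSeries.head_drop])
  have hlength : p.length ≤ i + (p.length - j) + 1 :=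
    hp shortcut (by simp [shortcut]) (by simp [shortcut])
  omega

end ShortestSeries

section Chordless

variable {V : Type*} {G : SimpleGraph V}

/-- The adjacency condition of a chordless path: among the vertices `v i`, the edges are exactly
those between consecutive ones. Distinctness of the vertices is not included. -/
def IsChordless (G : SimpleGraph V) {m : ℕ} (v : Fin m → V) : Prop :=
  ∀ i j : Fin m, G.Adj (v i) (v j) ↔ ((i : ℕ) + 1 = (j : ℕ) ∨ (j : ℕ) + 1 = (i : ℕ))

theorem IsChordless.hasChordlessPath {m n : ℕ} {v : Fin m → V} (hv : IsChordless G v)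
    (hinj : Function.Injective v) (hnm : n ≤ m) : HasChordlessPath G n :=
  ⟨v ∘ Fin.castLE hnm, hinj.comp (Fin.castLE_injective hnm), fun i j ↦
    hv (Fin.castLE hnm i) (Fin.castLE hnm j)⟩

variable [Preorder V]

/-- The edges of `G`, oriented upwards in the order on the vertices; its relation series are the
increasing walks of `G`. -/
def increasingAdj (G : SimpleGraph V) : SetRel V V :=
  {e | e.1 < e.2 ∧ G.Adj e.1 e.2}

theorem strictMono_of_increasingAdj (p : RelSeries (increasingAdj G)) : StrictMono p :=
  Fin.strictMono_iff_lt_succ.2 fun i ↦ (p.step i).1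

theorem IsShortest.isChordless {p : RelSeries (increasingAdj G)} (hp : IsShortest p) :
    IsChordless G p := by
  intro i j
  wlog hij : i ≤ j generalizing i j
  · rw [G.adj_comm, or_comm]
    exact this j i (le_of_not_ge hij)
  constructor
  · intro hadj
    have hlt : i < j := hij.lt_of_ne fun h ↦ hadj.ne (congrArg p h)
    have hle : (j : ℕ) ≤ i + 1 := hp.le_succ_of_rel ⟨strictMono_of_increasingAdj p hlt, hadj⟩
    omega
  · intro hconsecutive
    have hsucc : (i : ℕ) + 1 = j := by omega
    have hi : (i : ℕ) < p.length := by omega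
    obtain rfl : j = Fin.succ ⟨i, hi⟩ := Fin.ext hsucc.symm
    exact (p.step ⟨i, hi⟩).2

theorem reflTransGen_increasingAdj_of_lt [LocallyFiniteOrder V]
    (hcov : ∀ a b : V, a ⋖ b → G.Adj a b) {x y : V} (hxy : x < y) :
    ReflTransGen (· ~[increasingAdj G] ·) x y :=
  ((transGen_covBy_of_lt hxy).lift id fun a b hab ↦ ⟨hab.lt, hcov a b hab⟩).to_reflTransGen

end Chordless

theorem increasing_chordless_path_between_general {V : Type*} [Preorder V] [LocallyFiniteOrder V]
    (G : SimpleGraph V) (hcov : ∀ a b : V, a ⋖ b → G.Adj a b)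
    (n : ℕ) (hG : ¬ HasChordlessPath G n) (x y : V) (hxy : x < y) :
    ∃ k : ℕ, 1 ≤ k ∧ k ≤ n - 2 ∧
      ∃ a : Fin (k + 1) → V, StrictMono a ∧ a 0 = x ∧ a (Fin.last k) = y ∧
        IsChordless G a := by
  obtain ⟨p, hshortest, rfl, rfl⟩ :=
    exists_isShortest_of_reflTransGen (reflTransGen_increasingAdj_of_lt hcov hxy)
  have hmono : StrictMono p := strictMono_of_increasingAdj p
  have hchordless : IsChordless G p := hshortest.isChordless
  have hpos : 0 < p.length := hmono.lt_iff_lt.1 hxy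
  have hshort : p.length + 1 < n := by
    by_contra! hlong
    exact hG (hchordless.hasChordlessPath hmono.injective hlong)
  exact ⟨p.length, hpos, by omega, p, hmono, rfl, rfl, hchordless⟩

/-- If `G` is a graph on `{0, …, N-1}` with `i` adjacent to `i+1`, `n ≥ 2`, and `G`
has no chordless `n`-path, then any two vertices `x < y` are joined by an increasing
chordless path `x = a₀ < a₁ < ⋯ < a_k = y` with `1 ≤ k ≤ n - 2`. -/
theorem increasing_chordless_path_between {N : ℕ} (G : SimpleGraph (Fin N))
    (hpath : ∀ (i : ℕ) (h : i + 1 < N), G.Adj ⟨i, Nat.lt_of_succ_lt h⟩ ⟨i + 1, h⟩)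
    (n : ℕ) (hn : 2 ≤ n) (hG : ¬ HasChordlessPath G n) :
    ∀ x y : Fin N, x < y →
      ∃ k : ℕ, 1 ≤ k ∧ k ≤ n - 2 ∧
        ∃ a : Fin (k + 1) → Fin N, StrictMono a ∧ a 0 = x ∧ a (Fin.last k) = y ∧
          ∀ i j : Fin (k + 1), G.Adj (a i) (a j) ↔
            ((i : ℕ) + 1 = (j : ℕ) ∨ (j : ℕ) + 1 = (i : ℕ)) := by
  refine increasing_chordless_path_between_general G (fun ⟨a, _⟩ ⟨b, hb⟩ hab ↦ ?_) n hG
  obtain rfl : a + 1 = b := by simpa using hab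
  exact hpath a hb
end

section
/- Every finitely generated infinite lattice of length 3 contains arbitrarily long finite fences; that is, for every odd n there exist elements x₀, x₁, …, x_n of the lattice such that x₀ < x₁, for each even i with 0 < i < n one has x_i < x_{i−1} and x_i < x_{i+1}, and no comparability relations hold among x₀, …, x_n other than these. -/
/-- The generated sets: `latGen S 0 = S` and `latGen S (n+1)` is the set of all meets
and joins of pairs of elements of `latGen S n`. (Here `latGen S 0` plays the role of
`F₁` and `latGen S n` the role of `F_{n+1}`.) -/
def latGen {L : Type*} [Lattice L] (S : Set L) : ℕ → Set L
  | 0 => S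
  | n + 1 => {z | ∃ x ∈ latGen S n, ∃ y ∈ latGen S n, z = x ⊓ y ∨ z = x ⊔ y}

/-- A lattice is finitely generated if some finite subset generates every element via
iterated meets and joins. -/
def LatticeFG (L : Type*) [Lattice L] : Prop :=
  ∃ S : Set L, S.Finite ∧ ∀ x : L, ∃ n : ℕ, x ∈ latGen S n

/-- `L` contains a fence of length `n`: elements `x₀, …, x_n` with `x₀ < x₁`, with
`x_i < x_{i-1}` and `x_i < x_{i+1}` for each even `i` with `0 < i < n`, and no other
comparabilities among the `x_i`. -/
def ContainsFence (L : Type*) [Lattice L] (n : ℕ) : Prop :=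
  ∃ x : ℕ → L, x 0 < x 1 ∧
    (∀ i : ℕ, 0 < i → i < n → i % 2 = 0 → x i < x (i - 1) ∧ x i < x (i + 1)) ∧
    (∀ i j : ℕ, i ≤ n → j ≤ n → i ≠ j →
      ((x i ≤ x j ∨ x j ≤ x i) ↔ (i + 1 = j ∨ j + 1 = i)))

/-!
Enlarge the finite generating set so that it contains `⊥` and `⊤`. An element that first appears at
stage `k + 1` is the meet or join of two elements one of which first appeared at stage `k`. Going
backwards from a late stage this gives a long sequence, one new element per stage, in which
consecutive terms are comparable. Away from `⊥` and `⊤` comparable elements cover each other, so an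
element comparable to two others is their meet or join and appears at most one stage after them;
hence each term is comparable to at most one earlier term besides its predecessor. Starting from the
last term, pass to one of its at most two earlier neighbours together with an interval of terms,
about half as long, that ends there and contains no other neighbour. Iterating yields a long induced
path of the comparability relation, and transitivity forces it to alternate between up and down.
-/

open Set Relation

section InducedPath

variable {α : Type*} {r : α → α → Prop} {n : ℕ} {x : ℕ → α}

/-- `x 0, …, x n` are distinct and, among them, `r` relates an earlier term to a later one exactly
when they are consecutive. For symmetric `r` this is an induced path with `n` edges, and for
comparability it is a fence up to orientation; in general only the pairs `r (x i) (x j)` with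
`i < j` are constrained. The values of `x` beyond `n` are irrelevant. -/
def IsInducedPath (r : α → α → Prop) (n : ℕ) (x : ℕ → α) : Prop :=
  ∀ ⦃i j : ℕ⦄, i < j → j ≤ n → x i ≠ x j ∧ (r (x i) (x j) ↔ i + 1 = j)

namespace IsInducedPath

theorem mono {m : ℕ} (h : IsInducedPath r n x) (hmn : m ≤ n) : IsInducedPath r m x :=
  fun _ _ hij hj ↦ h hij (hj.trans hmn)

theorem tail (h : IsInducedPath r (n + 1) x) : IsInducedPath r n fun i ↦ x (i + 1) :=
  fun i j hij hj ↦ by simpa using h (Nat.succ_lt_succ hij) (Nat.succ_le_succ hj)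

theorem cons {b : α} (h : IsInducedPath r n x)
    (hb : ∀ i ≤ n, b ≠ x i ∧ (r b (x i) ↔ i = 0)) :
    IsInducedPath r (n + 1) fun i ↦ i.casesOn b x := by
  rintro (_ | i) (_ | j) hij hj
  · omega
  · simpa [eq_comm] using hb j (by omega)
  · omega
  · simpa using h (Nat.succ_lt_succ_iff.mp hij) (Nat.succ_le_succ_iff.mp hj)

theorem map {β : Type*} {s : β → β → Prop} {v : α → β} {t : Set α}
    (h : IsInducedPath (fun a b ↦ s (v a) (v b)) n x) (hv : InjOn v t)
    (hx : ∀ i ≤ n, x i ∈ t) : IsInducedPath s n (v ∘ x) := by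
  intro i j hij hj
  obtain ⟨hne, hiff⟩ := h hij hj
  exact ⟨fun heq ↦ hne (hv (hx i (by omega)) (hx j hj) heq), hiff⟩

end IsInducedPath

end InducedPath

section BackNeighbours

variable {r : ℕ → ℕ → Prop}

theorem exists_subinterval_rel_iff_eq_right {a b d : ℕ} (hd : a + (2 * d + 2) ≤ b)
    (hpred : r b (b - 1)) (huniq : {c | c + 2 ≤ b ∧ r b c}.Subsingleton) :
    ∃ a' b', a ≤ a' ∧ a' + d ≤ b' ∧ b' < b ∧ ∀ c ∈ Icc a' b', r b c ↔ c = b' := by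
  by_cases hfar : ∃ f, a ≤ f ∧ f + 2 ≤ b ∧ r b f
  · obtain ⟨f, haf, hfb, hrf⟩ := hfar
    by_cases hupper : f + 1 + d ≤ b - 1
    · refine ⟨f + 1, b - 1, by omega, hupper, by omega, fun c hc ↦ ⟨fun hrc ↦ ?_, ?_⟩⟩
      · by_contra hne
        have hcf : c = f := huniq ⟨by grind, hrc⟩ ⟨hfb, hrf⟩
        grind
      · rintro rfl
        exact hpred
    · refine ⟨a, f, le_rfl, by omega, by omega, fun c hc ↦ ⟨fun hrc ↦ ?_, ?_⟩⟩
      · exact huniq ⟨by grind, hrc⟩ ⟨hfb, hrf⟩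
      · rintro rfl
        exact hrf
  · refine ⟨a, b - 1, le_rfl, by omega, by omega, fun c hc ↦ ⟨fun hrc ↦ ?_, ?_⟩⟩
    · by_contra hne
      exact hfar ⟨c, hc.1, by grind, hrc⟩
    · rintro rfl
      exact hpred

-- Each step turns an interval of length `2 * d + 2` into one of length `d`; `4 ^ n` is a crude
-- solution of that recursion.
theorem exists_isInducedPath_of_subsingleton {K : ℕ} (hpred : ∀ i < K, r (i + 1) i)
    (huniq : ∀ i ≤ K, {j | j + 2 ≤ i ∧ r i j}.Subsingleton) (n : ℕ) {a b : ℕ} (hb : b ≤ K)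
    (hab : a + 4 ^ n ≤ b) :
    ∃ p : ℕ → ℕ, p 0 = b ∧ (∀ i ≤ n, p i ∈ Icc a b) ∧ IsInducedPath r n p := by
  induction n generalizing a b with
  | zero => exact ⟨fun _ ↦ b, rfl, fun _ _ ↦ right_mem_Icc.mpr (by omega), fun _ _ _ _ ↦ by omega⟩
  | succ n ih =>
    have hpos : 0 < 4 ^ n := by positivity
    have hpredb : r b (b - 1) := by
      simpa [Nat.sub_add_cancel (show 1 ≤ b by omega)] using hpred (b - 1) (by omega)
    obtain ⟨a', b', haa', hab', hb'b, honly⟩ :=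
      exists_subinterval_rel_iff_eq_right (d := 4 ^ n) (a := a) (by omega) hpredb (huniq b hb)
    obtain ⟨p, hp0, hpmem, hp⟩ := ih (hb'b.le.trans hb) hab'
    refine ⟨fun i ↦ i.casesOn b p, rfl, ?_, hp.cons fun i hi ↦ ?_⟩
    · rintro (_ | i) hi
      · exact right_mem_Icc.mpr (by omega)
      · exact Icc_subset_Icc haa' hb'b.le (hpmem i (by omega))
    · have hpi_eq : p i = b' ↔ i = 0 := by
        refine ⟨fun hpi ↦ ?_, fun hi0 ↦ hi0 ▸ hp0⟩
        by_contra hi0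
        exact (hp (Nat.pos_of_ne_zero hi0) hi).1 (hp0.trans hpi.symm)
      exact ⟨((hpmem i hi).2.trans_lt hb'b).ne', (honly _ (hpmem i hi)).trans hpi_eq⟩

end BackNeighbours

theorem exists_seq_rel_of_forall_exists_rel {α : Type*} {r : α → α → Prop} {N : ℕ → Set α}
    (hstep : ∀ k, ∀ x ∈ N (k + 1), ∃ y ∈ N k, r x y) {K : ℕ} {x : α} (hx : x ∈ N K) :
    ∃ v : ℕ → α, v K = x ∧ (∀ i ≤ K, v i ∈ N i) ∧ ∀ i < K, r (v (i + 1)) (v i) := by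
  induction K generalizing x with
  | zero => exact ⟨fun _ ↦ x, rfl, by simpa using hx, by simp⟩
  | succ K ih =>
    obtain ⟨y, hy, hxy⟩ := hstep K x hx
    obtain ⟨v, hvK, hvmem, hvrel⟩ := ih hy
    refine ⟨Function.update v (K + 1) x, by simp, fun i hi ↦ ?_, fun i hi ↦ ?_⟩
    · rcases hi.eq_or_lt with rfl | hlt
      · simpa using hx
      · simpa [hlt.ne] using hvmem i (by omega)
    · rcases (Nat.lt_succ_iff.mp hi).eq_or_lt with rfl | hlt
      · simpa [hvK] using hxy
      · simpa [hi.ne, hlt.ne] using hvrel i hlt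

section LatGen

variable {L : Type*} [Lattice L] {S T : Set L}

theorem latGen_monotone (S : Set L) : Monotone (latGen S) :=
  monotone_nat_of_le_succ fun _ x hx ↦ ⟨x, hx, x, hx, .inl (inf_idem x).symm⟩

theorem subset_latGen (S : Set L) (n : ℕ) : S ⊆ latGen S n :=
  latGen_monotone S n.zero_le

theorem latGen_mono_set (hST : S ⊆ T) (n : ℕ) : latGen S n ⊆ latGen T n := by
  induction n with
  | zero => exact hST
  | succ n ih =>
    rintro z ⟨x, hx, y, hy, hz⟩
    exact ⟨x, ih hx, y, ih hy, hz⟩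

theorem finite_latGen (hS : S.Finite) (n : ℕ) : (latGen S n).Finite := by
  induction n with
  | zero => exact hS
  | succ n ih =>
    refine ((ih.image2 (· ⊓ ·) ih).union (ih.image2 (· ⊔ ·) ih)).subset ?_
    rintro z ⟨x, hx, y, hy, rfl | rfl⟩
    · exact .inl ⟨x, hx, y, hy, rfl⟩
    · exact .inr ⟨x, hx, y, hy, rfl⟩

theorem latGen_subset_of_succ_subset {k : ℕ} (hk : latGen S (k + 1) ⊆ latGen S k) (n : ℕ) :
    latGen S n ⊆ latGen S k := by
  induction n with
  | zero => exact subset_latGen S k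
  | succ n ih =>
    rintro z ⟨x, hx, y, hy, hz⟩
    exact hk ⟨x, ih hx, y, ih hy, hz⟩

/-- The elements that first appear at stage `k + 1` of the generation from `S`. The terms of the
fence are taken from these sets, for distinct `k`. -/
def newGen (S : Set L) (k : ℕ) : Set L :=
  latGen S (k + 1) \ latGen S k

theorem newGen_nonempty [Infinite L] (hS : S.Finite) (hgen : ∀ x : L, ∃ n, x ∈ latGen S n)
    (k : ℕ) : (newGen S k).Nonempty := by
  refine sdiff_nonempty.mpr fun hk ↦ ?_
  obtain ⟨x, hx⟩ := (finite_latGen hS k).exists_notMem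
  obtain ⟨n, hn⟩ := hgen x
  exact hx (latGen_subset_of_succ_subset hk n hn)

theorem notMem_of_mem_newGen {k : ℕ} {x : L} (hx : x ∈ newGen S k) : x ∉ S :=
  fun hxS ↦ hx.2 (subset_latGen S k hxS)

theorem injOn_of_forall_mem_newGen {K : ℕ} {v : ℕ → L} (hv : ∀ i ≤ K, v i ∈ newGen S i) :
    InjOn v (Iic K) := by
  have hne : ∀ i j, i < j → j ≤ K → v i ≠ v j := fun i j hij hj heq ↦
    (hv j hj).2 (heq ▸ latGen_monotone S hij (hv i (by omega)).1)
  intro i hi j hj heq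
  by_contra hij
  rcases lt_or_gt_of_ne hij with hlt | hgt
  · exact hne i j hlt hj heq
  · exact hne j i hgt hi heq.symm

theorem exists_mem_newGen_comparable {k : ℕ} {x : L} (hx : x ∈ newGen S (k + 1)) :
    ∃ y ∈ newGen S k, SymmGen (· ≤ ·) x y := by
  obtain ⟨⟨y, hy, z, hz, hxyz⟩, hxnew⟩ := hx
  by_cases hyk : y ∈ latGen S k
  · have hzk : z ∉ latGen S k := fun hzk ↦ hxnew ⟨y, hyk, z, hzk, hxyz⟩
    refine ⟨z, ⟨hz, hzk⟩, ?_⟩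
    rcases hxyz with rfl | rfl
    · exact .of_le inf_le_right
    · exact .of_ge le_sup_right
  · refine ⟨y, ⟨hy, hyk⟩, ?_⟩
    rcases hxyz with rfl | rfl
    · exact .of_le inf_le_left
    · exact .of_ge le_sup_left

theorem eq_inf_or_eq_sup_of_comparable {x y z : L} {U : Set L}
    (hU : ∀ a ∈ U, ∀ c ∈ U, a ≤ c → a ⩿ c) (hx : x ∈ U) (hy : y ∈ U) (hz : z ∈ U)
    (hyz : y ≠ z) (hxy : SymmGen (· ≤ ·) x y) (hxz : SymmGen (· ≤ ·) x z) :
    x = y ⊓ z ∨ x = y ⊔ z := by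
  rcases hxy with hxy | hyx <;> rcases hxz with hxz | hzx
  · exact .inl ((hU x hx y hy hxy).inf_eq (hU x hx z hz hxz) hyz).symm
  · rcases (hU z hz y hy (hzx.trans hxy)).eq_or_eq hzx hxy with rfl | rfl
    · exact .inl (inf_eq_right.mpr hxy).symm
    · exact .inr (sup_eq_left.mpr hzx).symm
  · rcases (hU y hy z hz (hyx.trans hxz)).eq_or_eq hyx hxz with rfl | rfl
    · exact .inl (inf_eq_left.mpr hxz).symm
    · exact .inr (sup_eq_right.mpr hyx).symm
  · exact .inr ((hU y hy x hx hyx).sup_eq (hU z hz x hx hzx) hyz).symm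

theorem subsingleton_comparable_of_forall_mem_newGen {K : ℕ} {v : ℕ → L}
    (hS : ∀ a ∉ S, ∀ c ∉ S, a ≤ c → a ⩿ c) (hv : ∀ i ≤ K, v i ∈ newGen S i) {i : ℕ}
    (hi : i ≤ K) : {j | j + 2 ≤ i ∧ SymmGen (· ≤ ·) (v i) (v j)}.Subsingleton := by
  rintro j ⟨hji, hcompj⟩ l ⟨hli, hcompl⟩
  have hmem : ∀ m, m + 2 ≤ i → v m ∈ latGen S (i - 1) := fun m hm ↦
    latGen_monotone S (by omega) (hv m (by omega)).1
  have hnotMem : ∀ m ≤ i, v m ∈ Sᶜ := fun m hm ↦ notMem_of_mem_newGen (hv m (hm.trans hi))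
  by_contra hjl
  have hvjl : v j ≠ v l := (injOn_of_forall_mem_newGen hv).ne
    (show j ≤ K by omega) (show l ≤ K by omega) hjl
  have hgen : v i ∈ latGen S (i - 1 + 1) :=
    ⟨v j, hmem j hji, v l, hmem l hli, eq_inf_or_eq_sup_of_comparable hS (hnotMem i le_rfl)
      (hnotMem j (by omega)) (hnotMem l (by omega)) hvjl hcompj hcompl⟩
  rw [Nat.sub_add_cancel (by omega)] at hgen
  exact (hv i hi).2 hgen

end LatGen

namespace IsInducedPath

section PartialOrder

variable {α : Type*} [PartialOrder α] {n : ℕ} {x : ℕ → α}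

theorem lt_or_gt_succ (h : IsInducedPath (SymmGen (· ≤ ·)) n x) {i : ℕ} (hi : i < n) :
    x i < x (i + 1) ∨ x (i + 1) < x i := by
  obtain ⟨hne, hiff⟩ := h i.lt_succ_self hi
  exact (hiff.mpr rfl).imp hne.lt_of_le hne.symm.lt_of_le

theorem not_comparable_add_two (h : IsInducedPath (SymmGen (· ≤ ·)) n x) {i : ℕ}
    (hi : i + 1 < n) : ¬ SymmGen (· ≤ ·) (x i) (x (i + 2)) := fun hcomp ↦ by
  have := (h (show i < i + 2 by omega) hi).2.mp hcomp
  omega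

theorem add_two_lt_of_lt (h : IsInducedPath (SymmGen (· ≤ ·)) n x) {i : ℕ} (hi : i + 1 < n)
    (hlt : x i < x (i + 1)) : x (i + 2) < x (i + 1) :=
  (h.lt_or_gt_succ hi).resolve_left fun hlt' ↦
    h.not_comparable_add_two hi (.of_le (hlt.trans hlt').le)

theorem lt_add_two_of_gt (h : IsInducedPath (SymmGen (· ≤ ·)) n x) {i : ℕ} (hi : i + 1 < n)
    (hgt : x (i + 1) < x i) : x (i + 1) < x (i + 2) :=
  (h.lt_or_gt_succ hi).resolve_right fun hgt' ↦
    h.not_comparable_add_two hi (.of_ge (hgt'.trans hgt).le)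

theorem lt_succ_two_mul (h : IsInducedPath (SymmGen (· ≤ ·)) n x) (h01 : x 0 < x 1) {k : ℕ}
    (hk : 2 * k < n) : x (2 * k) < x (2 * k + 1) := by
  induction k with
  | zero => exact h01
  | succ k ih =>
    have hdown : x (2 * k + 2) < x (2 * k + 1) :=
      h.add_two_lt_of_lt (by omega) (ih (by omega))
    exact h.lt_add_two_of_gt (by omega) hdown

end PartialOrder

variable {L : Type*} [Lattice L] {n : ℕ} {x : ℕ → L}

theorem containsFence_of_lt (h : IsInducedPath (SymmGen (· ≤ ·)) n x) (h01 : x 0 < x 1) :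
    ContainsFence L n := by
  refine ⟨x, h01, fun i hpos hin heven ↦ ?_, fun i j hi hj hij ↦ ?_⟩
  · obtain ⟨k, rfl⟩ : ∃ k, i = 2 * k + 2 := ⟨i / 2 - 1, by omega⟩
    have hup : x (2 * k) < x (2 * k + 1) := h.lt_succ_two_mul h01 (by omega)
    exact ⟨h.add_two_lt_of_lt (by omega) hup, h.lt_succ_two_mul h01 (k := k + 1) hin⟩
  · rcases lt_or_gt_of_ne hij with hlt | hgt
    · exact (h hlt hj).2.trans (by omega)
    · exact or_comm.trans ((h hgt hi).2.trans (by omega))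

theorem containsFence (h : IsInducedPath (SymmGen (· ≤ ·)) (n + 2) x) : ContainsFence L n := by
  rcases h.lt_or_gt_succ (i := 0) (by omega) with hlt | hgt
  · exact (h.mono (by omega)).containsFence_of_lt hlt
  · exact (h.tail.mono (by omega)).containsFence_of_lt (h.lt_add_two_of_gt (by omega) hgt)

end IsInducedPath

theorem wcovBy_of_isAtom_or_isCoatom {α : Type*} [PartialOrder α] [BoundedOrder α]
    (hlen : ∀ z : α, z ≠ ⊥ → z ≠ ⊤ → IsAtom z ∨ IsCoatom z) {a c : α} (ha : a ≠ ⊥) (hc : c ≠ ⊤)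
    (hac : a ≤ c) : a ⩿ c := by
  refine ⟨hac, fun b hab hbc ↦ ?_⟩
  rcases hlen b hab.ne_bot hbc.ne_top with hatom | hcoatom
  · exact ha (hatom.2 a hab)
  · exact hc (hcoatom.2 c hbc)

theorem fg_infinite_length_three_lattice_fences_general {L : Type*} [Lattice L] [Infinite L]
    {T : Set L} (hT : T.Finite) (hcov : ∀ a ∉ T, ∀ c ∉ T, a ≤ c → a ⩿ c) (hfg : LatticeFG L)
    (n : ℕ) : ContainsFence L n := by
  obtain ⟨S, hS, hgen⟩ := hfg
  have hgenST : ∀ x : L, ∃ k, x ∈ latGen (S ∪ T) k := fun x ↦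
    (hgen x).imp fun k hk ↦ latGen_mono_set subset_union_left k hk
  have hcovST : ∀ a ∉ S ∪ T, ∀ c ∉ S ∪ T, a ≤ c → a ⩿ c := fun a ha c hc ↦
    hcov a (fun haT ↦ ha (.inr haT)) c (fun hcT ↦ hc (.inr hcT))
  obtain ⟨x, hx⟩ := newGen_nonempty (hS.union hT) hgenST (4 ^ (n + 2))
  obtain ⟨v, -, hvnew, hvcomp⟩ := exists_seq_rel_of_forall_exists_rel
    (fun _ _ ↦ exists_mem_newGen_comparable) hx
  obtain ⟨p, -, hpmem, hp⟩ := exists_isInducedPath_of_subsingleton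
    (r := fun i j ↦ SymmGen (· ≤ ·) (v i) (v j)) hvcomp
    (fun _ ↦ subsingleton_comparable_of_forall_mem_newGen hcovST hvnew) (n + 2)
    le_rfl (zero_add _).le
  exact (hp.map (injOn_of_forall_mem_newGen hvnew) fun i hi ↦ (hpmem i hi).2).containsFence

/-- Every finitely generated infinite lattice of length 3 contains arbitrarily long
finite fences. -/
theorem fg_infinite_length_three_lattice_fences {L : Type*} [Lattice L] [BoundedOrder L]
    [Infinite L] (hbot_top : (⊥ : L) ≠ ⊤)
    (hlen : ∀ z : L, z ≠ ⊥ → z ≠ ⊤ → IsAtom z ∨ IsCoatom z)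
    (hfg : LatticeFG L) :
    ∀ n : ℕ, Odd n → ContainsFence L n := by
  exact fun n _ ↦ fg_infinite_length_three_lattice_fences_general (toFinite {⊥, ⊤})
    (fun a ha c hc ↦ wcovBy_of_isAtom_or_isCoatom hlen (by grind) (by grind)) hfg n
end

section
/- For every injective function f : ℕ → ℕ there exists a graph G with vertex set ℕ such that: (i) n and n+1 are adjacent in G for every n ∈ ℕ (so G is traceable via the identity); (ii) G contains no chordless 4-path; and (iii) for every injective map g from the vertices of the complete countable bipartite graph K_{ω,ω} into ℕ such that adjacent vertices of K_{ω,ω} are mapped to adjacent vertices of G, and for every k ∈ ℕ, k is in the range of f if and only if there exists x ≤ max{g(a_i) : i ≤ k} with f(x) = k, where {a_n : n ∈ ℕ} is one of the two parts of K_{ω,ω}. -/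
/-!
Join `n` and `m` when the minimum of `f` over the interval between them is attained at `n` or at
`m`. This is the comparability graph of the ancestor order of the Cartesian tree of `f`, in which
the ancestors of a vertex form a chain, and such a graph has no chordless 4-path. Since `f` is
injective, a vertex has only finitely many ancestors, so a vertex `n` of infinite degree has
arbitrarily large descendants, whence `f n ≤ f m` for all `m ≥ n`. All `aᵢ` are sent to such
vertices; among the `k + 1` values `f (g (aᵢ))` with `i ≤ k`, some value is at least `k`, so
`f` can only take the value `k` at or before the corresponding vertex `g (aᵢ)`.
-/

open Set SimpleGraph

section ForestOrder

variable {V : Type*} {r : V → V → Prop} [IsTrans V r]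

theorem fromRel_adj_of_rel_of_adj (chain : ∀ ⦃a b c⦄, r a c → r b c → r a b ∨ r b a) {b c d : V}
    (hbc : r b c) (hcd : (fromRel r).Adj c d) (hbd : b ≠ d) : (fromRel r).Adj b d := by
  refine (fromRel_adj r b d).2 ⟨hbd, ?_⟩
  rcases ((fromRel_adj r c d).1 hcd).2 with hcd | hdc
  · exact .inl (_root_.trans hbc hcd)
  · exact chain hbc hdc

theorem not_hasChordlessPath_four_fromRel (chain : ∀ ⦃a b c⦄, r a c → r b c → r a b ∨ r b a) :
    ¬ HasChordlessPath (fromRel r) 4 := by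
  rintro ⟨v, v_injective, adj_iff⟩
  have adj₁₀ : (fromRel r).Adj (v 1) (v 0) := (adj_iff 1 0).2 (by decide)
  have adj₁₂ : (fromRel r).Adj (v 1) (v 2) := (adj_iff 1 2).2 (by decide)
  have adj₂₃ : (fromRel r).Adj (v 2) (v 3) := (adj_iff 2 3).2 (by decide)
  rcases ((fromRel_adj r _ _).1 adj₁₂).2 with h₁₂ | h₂₁
  · have chord := fromRel_adj_of_rel_of_adj chain h₁₂ adj₂₃ (v_injective.ne (by decide))
    exact absurd ((adj_iff 1 3).1 chord) (by decide)
  · have chord := fromRel_adj_of_rel_of_adj chain h₂₁ adj₁₀ (v_injective.ne (by decide))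
    exact absurd ((adj_iff 2 0).1 chord) (by decide)

end ForestOrder

/-- `a` is an ancestor of `b` (possibly `b` itself) in the Cartesian tree of `f`: among the points
between `a` and `b`, inclusive and in either order, `f` is minimal at `a`. -/
def IsCartesianAncestor {α β : Type*} [Lattice α] [Preorder β] (f : α → β) (a b : α) : Prop :=
  IsMinOn f (uIcc a b) a

/-- The comparability graph of the ancestor relation of the Cartesian tree of `f`; it is the
graph that codes the range of `f`. -/
def cartesianGraph {α β : Type*} [Lattice α] [Preorder β] (f : α → β) : SimpleGraph α :=
  fromRel (IsCartesianAncestor f)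

namespace IsCartesianAncestor

variable {α β : Type*} {f : α → β} {a b c : α}

theorem apply_le [Lattice α] [Preorder β] (h : IsCartesianAncestor f a b) : f a ≤ f b :=
  h right_mem_uIcc

theorem finite_ancestors [Lattice α] [Preorder β] [LocallyFiniteOrderBot β]
    (hf : Function.Injective f) (b : α) : {a | IsCartesianAncestor f a b}.Finite :=
  ((finite_Iic (f b)).preimage hf.injOn).subset fun _ h => h.apply_le

variable [LinearOrder α]

theorem of_forall_uIcc_le [Preorder β] (hab : IsCartesianAncestor f a b)
    (hbc : ∀ x ∈ uIcc b c, f a ≤ f x) : IsCartesianAncestor f a c := fun x hx =>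
  (uIcc_subset_uIcc_union_uIcc hx).elim (fun hx => hab hx) (hbc x)

instance isTrans [Preorder β] : IsTrans α (IsCartesianAncestor f) where
  trans _ _ _ hab hbc := hab.of_forall_uIcc_le fun _ hx => hab.apply_le.trans (hbc hx)

theorem total_of_common_descendant [LinearOrder β] (hac : IsCartesianAncestor f a c)
    (hbc : IsCartesianAncestor f b c) : IsCartesianAncestor f a b ∨ IsCartesianAncestor f b a := by
  rcases le_total (f a) (f b) with hab | hba
  · exact .inl (hac.of_forall_uIcc_le fun x hx => hab.trans (hbc (uIcc_comm c b ▸ hx)))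
  · exact .inr (hbc.of_forall_uIcc_le fun x hx => hba.trans (hac (uIcc_comm c a ▸ hx)))

end IsCartesianAncestor

section CartesianGraph

variable {α β : Type*} [LinearOrder α] {f : α → β} {a b : α}

theorem not_hasChordlessPath_four_cartesianGraph [LinearOrder β] (f : α → β) :
    ¬ HasChordlessPath (cartesianGraph f) 4 :=
  not_hasChordlessPath_four_fromRel fun _ _ _ =>
    IsCartesianAncestor.total_of_common_descendant

theorem cartesianGraph_adj_of_covBy [LinearOrder β] (f : α → β) (hab : a ⋖ b) :
    (cartesianGraph f).Adj a b := by
  have interval : uIcc a b = {a, b} := by rw [uIcc_of_le hab.le, hab.Icc_eq]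
  refine (fromRel_adj _ a b).2 ⟨hab.ne, (le_total (f a) (f b)).imp (fun h => ?_) fun h => ?_⟩
  · simpa [IsCartesianAncestor, interval, isMinOn_iff] using h
  · simpa [IsCartesianAncestor, uIcc_comm b a, interval, isMinOn_iff] using h

theorem isMinOn_Ici_of_infinite_neighborSet_cartesianGraph [LocallyFiniteOrderBot α] [Preorder β]
    [LocallyFiniteOrderBot β] (hf : Function.Injective f)
    (ha : ((cartesianGraph f).neighborSet a).Infinite) : IsMinOn f (Ici a) a := by
  have descendants_infinite : {b | IsCartesianAncestor f a b}.Infinite := by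
    refine (ha.sdiff (IsCartesianAncestor.finite_ancestors hf a)).mono ?_
    rintro b ⟨hab, not_ancestor⟩
    exact ((fromRel_adj _ a b).1 hab).2.resolve_right not_ancestor
  intro b hab
  obtain ⟨c, hac, hbc⟩ := descendants_infinite.exists_gt b
  exact hac (mem_uIcc_of_le hab hbc.le)

end CartesianGraph

theorem infinite_neighborSet_of_completeBipartiteGraph_hom {V W X : Type*} [Infinite W]
    {G : SimpleGraph X} (φ : completeBipartiteGraph V W →g G) (hφ : Function.Injective φ) (v : V) :
    (G.neighborSet (φ (Sum.inl v))).Infinite :=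
  infinite_of_injective_forall_mem (hφ.comp Sum.inr_injective) fun w =>
    φ.map_adj (v := Sum.inl v) (w := Sum.inr w) (by simp)

theorem exists_le_le_apply_of_injective {u : ℕ → ℕ} (hu : Function.Injective u) (k : ℕ) :
    ∃ i ≤ k, k ≤ u i := by
  have card_lt : (Finset.range k).card < ((Finset.range (k + 1)).image u).card := by
    simp [Finset.card_image_of_injective _ hu]
  simpa [Nat.lt_succ_iff] using Finset.exists_mem_notMem_of_card_lt_card card_lt

theorem exists_index_le_apply_of_forall_isMinOn_Ici {α : Type*} [LinearOrder α] {f : α → ℕ}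
    (hf : Function.Injective f) {a : ℕ → α} (ha : Function.Injective a)
    (hmin : ∀ i, IsMinOn f (Ici (a i)) (a i)) (x : α) : ∃ i ≤ f x, x ≤ a i := by
  obtain ⟨i, hi, hle⟩ := exists_le_le_apply_of_injective (hf.comp ha) (f x)
  refine ⟨i, hi, le_of_not_gt fun hlt => hlt.ne (hf ?_)⟩
  exact le_antisymm (hmin i hlt.le) hle

/-- For every injective `f : ℕ → ℕ` there is a graph `G` on `ℕ`, traceable via the
identity and with no chordless 4-path, such that from any embedding `g` of
`K_{ω,ω}` (with parts `a_n = Sum.inl n` and `b_m = Sum.inr m`) into `G` one can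
decide membership in the range of `f`: `k` is in the range of `f` iff `f x = k` for
some `x ≤ max {g(a_i) : i ≤ k}`. -/
theorem exists_graph_coding_range_via_Komegaomega (f : ℕ → ℕ) (hf : Function.Injective f) :
    ∃ G : SimpleGraph ℕ,
      (∀ n : ℕ, G.Adj n (n + 1)) ∧
      ¬ HasChordlessPath G 4 ∧
      ∀ g : ℕ ⊕ ℕ → ℕ, Function.Injective g →
        (∀ x y : ℕ ⊕ ℕ, (completeBipartiteGraph ℕ ℕ).Adj x y → G.Adj (g x) (g y)) →
        ∀ k : ℕ, (∃ x : ℕ, f x = k) ↔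
          ∃ x ≤ (Finset.range (k + 1)).sup (fun i => g (Sum.inl i)), f x = k := by
  refine ⟨cartesianGraph f, fun n => cartesianGraph_adj_of_covBy f (Order.covBy_add_one n),
    not_hasChordlessPath_four_cartesianGraph f, fun g hg hadj k => ⟨?_, ?_⟩⟩
  · rintro ⟨x, rfl⟩
    have hmin (i : ℕ) : IsMinOn f (Ici (g (Sum.inl i))) (g (Sum.inl i)) :=
      isMinOn_Ici_of_infinite_neighborSet_cartesianGraph hf
        (infinite_neighborSet_of_completeBipartiteGraph_hom ⟨g, hadj _ _⟩ hg i)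
    obtain ⟨i, hi, hx⟩ :=
      exists_index_le_apply_of_forall_isMinOn_Ici hf (hg.comp Sum.inl_injective) hmin x
    have hsup := Finset.le_sup (f := fun i => g (Sum.inl i)) (Finset.mem_range_succ_iff.2 hi)
    exact ⟨x, hx.trans hsup, rfl⟩
  · rintro ⟨x, -, hx⟩
    exact ⟨x, hx⟩
end
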